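/- Suppose a and b are linked by I over M, every associated prime of M/IM is minimal, and let t = grade(I, M). Then for every minimal prime p of Ass(M/aM), the height of p on M equals t and the localization M_p is a Cohen-Macaulay R_p-module. -/

import Mathlib

open RingTheory.Sequence

/-- The colon submodule `N :_M a = {m ∈ M | a m ⊆ N}`. -/
def Submodule.colonBy {R M : Type*} [CommRing R] [AddCommGroup M] [Module R M]
    (N : Submodule R M) (a : Ideal R) : Submodule R M :=
  ⨅ r ∈ a, N.comap (LinearMap.lsmul R M r)
/-- `a` and `b` are linked by `I` over `M`: `I ⊆ a ∩ b` is generated by an `M`-regular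
sequence, `aM ≠ M ≠ bM`, `IM :_M a = bM` and `IM :_M b = aM`. -/
def Ideal.LinkedBy (R M : Type*) [CommRing R] [AddCommGroup M] [Module R M]
    (a b I : Ideal R) : Prop :=
  I ≤ a ⊓ b ∧
  (∃ rs : List R, I = Ideal.ofList rs ∧ RingTheory.Sequence.IsRegular M rs) ∧
  a • (⊤ : Submodule R M) ≠ ⊤ ∧ b • (⊤ : Submodule R M) ≠ ⊤ ∧
  (I • ⊤ : Submodule R M).colonBy a = b • (⊤ : Submodule R M) ∧
  (I • ⊤ : Submodule R M).colonBy b = a • (⊤ : Submodule R M)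
/-- The `M`-grade of an ideal `c`: the length of a maximal `M`-regular sequence
with entries in `c`. -/
noncomputable def Module.grade (R : Type*) [CommRing R] (c : Ideal R)
    (M : Type*) [AddCommGroup M] [Module R M] : ℕ :=
  sSup {n | ∃ rs : List R, rs.length = n ∧ (∀ r ∈ rs, r ∈ c) ∧
    RingTheory.Sequence.IsRegular M rs}
/-- The dimension of a module: the Krull dimension of `R / ann M`. -/
noncomputable def Module.dim (R : Type*) [CommRing R]
    (M : Type*) [AddCommGroup M] [Module R M] : WithBot (WithTop ℕ) :=
  ringKrullDim (R ⧸ Module.annihilator R M)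

/-- A module over a local ring is Cohen–Macaulay if its depth (the grade of the
maximal ideal) equals its dimension. -/
def Module.IsCM (R : Type*) [CommRing R] [IsLocalRing R]
    (M : Type*) [AddCommGroup M] [Module R M] : Prop :=
  (Module.grade R (IsLocalRing.maximalIdeal R) M : WithBot (WithTop ℕ)) = Module.dim R M

theorem Submodule.mem_colonBy {R M : Type*} [CommRing R] [AddCommGroup M] [Module R M]
    {N : Submodule R M} {a : Ideal R} {m : M} :
    m ∈ N.colonBy a ↔ ∀ r ∈ a, r • m ∈ N := by
  simp [Submodule.colonBy]

theorem associatedPrimes_quotient_colonBy_subset {R M : Type*} [CommRing R] [IsNoetherianRing R]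
    [AddCommGroup M] [Module R M] [Module.Finite R M] (N : Submodule R M) (b : Ideal R) :
    associatedPrimes R (M ⧸ N.colonBy b) ⊆ associatedPrimes R (M ⧸ N) := by
  intro p hp
  obtain ⟨hprime, x, hx⟩ := isAssociatedPrime_iff.mp (AssociatedPrimes.mem_iff.mp hp)
  obtain ⟨m, rfl⟩ := Submodule.mkQ_surjective _ x
  let L : Submodule R (M ⧸ N) := b • Submodule.span R {N.mkQ m}
  have hL : Module.annihilator R L = p := by
    ext r
    rw [hx, Submodule.mem_colon_singleton, Submodule.mem_bot, ← map_smul,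
      Submodule.mkQ_apply, Submodule.Quotient.mk_eq_zero, Submodule.mem_colonBy,
      Submodule.mem_annihilator]
    constructor
    · intro h c hc
      have h0 := h (c • N.mkQ m)
        (Submodule.smul_mem_smul hc (Submodule.mem_span_singleton_self _))
      rwa [← map_smul, ← map_smul, Submodule.mkQ_apply, Submodule.Quotient.mk_eq_zero,
        smul_comm] at h0
    · intro h y hy
      refine Submodule.smul_induction_on hy (fun c hc z hz ↦ ?_) (fun y z hy hz ↦ ?_)
      · obtain ⟨d, rfl⟩ := Submodule.mem_span_singleton.mp hz
        rw [← map_smul, ← map_smul, ← map_smul, Submodule.mkQ_apply,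
          Submodule.Quotient.mk_eq_zero]
        have := N.smul_mem d (h c hc)
        rwa [smul_comm d, smul_comm d, smul_comm c] at this
      · rw [smul_add, hy, hz, add_zero]
  have hpL : p ∈ associatedPrimes R L := by
    apply Module.associatedPrimes.minimalPrimes_annihilator_subset_associatedPrimes R L
    rw [hL, Ideal.minimalPrimes_eq_subsingleton_self]
    rfl
  exact associatedPrimes.subset_of_injective L.injective_subtype hpL

theorem Module.length_le_supportDim_of_isRegular {R M : Type*} [CommRing R] [IsNoetherianRing R]
    [IsLocalRing R] [AddCommGroup M] [Module R M] [Module.Finite R M] {rs : List R}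
    (reg : IsRegular M rs) : (rs.length : WithBot ℕ∞) ≤ Module.supportDim R M := by
  rw [← Module.supportDim_add_length_eq_supportDim_of_isRegular rs reg]
  have : Nontrivial (M ⧸ (Ideal.ofList rs • ⊤ : Submodule R M)) :=
    Submodule.Quotient.nontrivial_iff.mpr reg.top_ne_smul.symm
  have h0 : 0 ≤ Module.supportDim R (M ⧸ (Ideal.ofList rs • ⊤ : Submodule R M)) :=
    Order.krullDim_nonneg_iff.mpr Module.nonempty_support_of_nontrivial.to_subtype
  exact le_add_of_nonneg_left h0

theorem Module.grade_eq_length_of_isRegular {R M : Type*} [CommRing R]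
    [AddCommGroup M] [Module R M] {c : Ideal R} {rs : List R} (reg : IsRegular M rs)
    (mem : ∀ r ∈ rs, r ∈ c)
    (hle : ∀ ss : List R, (∀ r ∈ ss, r ∈ c) → IsRegular M ss → ss.length ≤ rs.length) :
    Module.grade R c M = rs.length := by
  refine IsGreatest.csSup_eq ⟨⟨rs, rfl, mem, reg⟩, ?_⟩
  rintro _ ⟨ss, rfl, hss, hreg⟩
  exact hle ss hss hreg

theorem Module.comap_mem_support_of_mem_support_localizedModule {R M : Type*} [CommRing R]
    [AddCommGroup M] [Module R M] [Module.Finite R M] (S : Submonoid R)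
    {Q : PrimeSpectrum (Localization S)}
    (hQ : Q ∈ Module.support (Localization S) (LocalizedModule S M)) :
    PrimeSpectrum.comap (algebraMap R (Localization S)) Q ∈ Module.support R M := by
  rw [Module.mem_support_iff_of_finite] at hQ ⊢
  intro r hr
  refine hQ (Module.mem_annihilator.mpr fun x ↦ ?_)
  induction x using LocalizedModule.induction_on with
  | h m s =>
    rw [algebraMap_smul, LocalizedModule.smul'_mk, Module.mem_annihilator.mp hr m,
      LocalizedModule.zero_mk]

/-- If `p` is a minimal member of the support of `M / IM` then `M_p / I M_p` has dimension zero. -/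
theorem Module.supportDim_localizedModule_quotient_eq_zero {R M : Type*} [CommRing R]
    [AddCommGroup M] [Module R M] [Module.Finite R M] (I p : Ideal R) [p.IsPrime]
    (hp : p ∈ (Module.annihilator R (M ⧸ (I • ⊤ : Submodule R M))).minimalPrimes)
    [Nontrivial (LocalizedModule p.primeCompl M ⧸
      (I.map (algebraMap R (Localization.AtPrime p)) • ⊤ :
        Submodule (Localization.AtPrime p) (LocalizedModule p.primeCompl M)))] :
    Module.supportDim (Localization.AtPrime p) (LocalizedModule p.primeCompl M ⧸
      (I.map (algebraMap R (Localization.AtPrime p)) • ⊤ :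
        Submodule (Localization.AtPrime p) (LocalizedModule p.primeCompl M))) = 0 := by
  have key : ∀ Q ∈ Module.support (Localization.AtPrime p) (LocalizedModule p.primeCompl M ⧸
      (I.map (algebraMap R (Localization.AtPrime p)) • ⊤ :
        Submodule (Localization.AtPrime p) (LocalizedModule p.primeCompl M))),
      (PrimeSpectrum.comap (algebraMap R (Localization.AtPrime p)) Q).asIdeal = p := by
    intro Q hQ
    rw [Module.support_quotient] at hQ
    have hle : (PrimeSpectrum.comap (algebraMap R (Localization.AtPrime p)) Q).asIdeal ≤ p := by
      intro r hr
      by_contra hrp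
      exact Q.2.ne_top (Ideal.eq_top_of_isUnit_mem _ hr
        (IsLocalization.map_units (Localization.AtPrime p) (⟨r, hrp⟩ : p.primeCompl)))
    have hsupp : PrimeSpectrum.comap (algebraMap R (Localization.AtPrime p)) Q ∈
        Module.support R (M ⧸ (I • ⊤ : Submodule R M)) := by
      rw [Module.support_quotient]
      exact ⟨Module.comap_mem_support_of_mem_support_localizedModule _ hQ.1,
        Ideal.map_le_iff_le_comap.mp hQ.2⟩
    exact le_antisymm hle
      (hp.2 ⟨PrimeSpectrum.isPrime _, Module.mem_support_iff_of_finite.mp hsupp⟩ hle)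
  have hne := (Module.nonempty_support_of_nontrivial (R := Localization.AtPrime p)
    (M := LocalizedModule p.primeCompl M ⧸
      (I.map (algebraMap R (Localization.AtPrime p)) • ⊤ :
        Submodule (Localization.AtPrime p) (LocalizedModule p.primeCompl M)))).to_subtype
  have hsub : Subsingleton (Module.support (Localization.AtPrime p)
      (LocalizedModule p.primeCompl M ⧸
      (I.map (algebraMap R (Localization.AtPrime p)) • ⊤ :
        Submodule (Localization.AtPrime p) (LocalizedModule p.primeCompl M)))) :=
    ⟨fun Q Q' ↦ Subtype.ext (PrimeSpectrum.localization_comap_injective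
      (Localization.AtPrime p) p.primeCompl
      (PrimeSpectrum.ext ((key Q Q.2).trans (key Q' Q'.2).symm)))⟩
  exact Order.krullDim_eq_zero

/-- If `a` and `b` are linked by `I` over `M`, every associated prime of `M/IM` is
minimal, and `t = grade(I, M)`, then for every minimal associated prime `p` of `M/aM`,
the height of `p` on `M` (i.e. `dim M_p`) equals `t` and `M_p` is a Cohen–Macaulay
`R_p`-module. -/
theorem localization_cm_of_linked {R M : Type*} [CommRing R] [IsNoetherianRing R]
    [AddCommGroup M] [Module R M] [Module.Finite R M]
    (a b I : Ideal R) (h : Ideal.LinkedBy R M a b I)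
    (hmin : ∀ p ∈ associatedPrimes R (M ⧸ (I • ⊤ : Submodule R M)),
      ∀ q ∈ associatedPrimes R (M ⧸ (I • ⊤ : Submodule R M)), q ≤ p → q = p)
    (t : ℕ) (ht : t = Module.grade R I M)
    (p : Ideal R) [p.IsPrime]
    (hp : p ∈ associatedPrimes R (M ⧸ (a • ⊤ : Submodule R M)))
    (hpmin : ∀ q ∈ associatedPrimes R (M ⧸ (a • ⊤ : Submodule R M)), q ≤ p → q = p) :
    Module.dim (Localization.AtPrime p) (LocalizedModule p.primeCompl M) =
        (t : WithBot (WithTop ℕ)) ∧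
      Module.IsCM (Localization.AtPrime p) (LocalizedModule p.primeCompl M) := by
  obtain ⟨-, ⟨rs, rfl, reg⟩, -, -, -, hb⟩ := h
  rw [← hb] at hp
  have hpI := associatedPrimes_quotient_colonBy_subset _ _ hp
  have hannp : Module.annihilator R (M ⧸ (Ideal.ofList rs • ⊤ : Submodule R M)) ≤ p :=
    Submodule.annihilator_top (R := R) (M := M ⧸ (Ideal.ofList rs • ⊤ : Submodule R M)) ▸
      IsAssociatedPrime.annihilator_le hpI
  have hpmin' : p ∈
      (Module.annihilator R (M ⧸ (Ideal.ofList rs • ⊤ : Submodule R M))).minimalPrimes := by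
    obtain ⟨q, hq, hqp⟩ := Ideal.exists_minimalPrimes_le hannp
    rwa [← hmin p hpI q
      (Module.associatedPrimes.minimalPrimes_annihilator_subset_associatedPrimes R _ hq) hqp]
  have hsupp : (⟨p, inferInstance⟩ : PrimeSpectrum R) ∈
      Module.support R (M ⧸ (Ideal.ofList rs • ⊤ : Submodule R M)) :=
    Module.mem_support_iff_of_finite.mpr hannp
  rw [Module.support_quotient] at hsupp
  have hIp : Ideal.ofList rs ≤ p := hsupp.2
  have : Nontrivial (LocalizedModule p.primeCompl M) := Module.mem_support_iff.mp hsupp.1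
  have hloc : ∀ ss : List R, (∀ r ∈ ss, r ∈ p) → IsRegular M ss →
      IsRegular (LocalizedModule p.primeCompl M)
        (ss.map (algebraMap R (Localization.AtPrime p))) := fun ss hss hreg ↦
    hreg.toIsWeaklyRegular.isRegular_of_isLocalizedModule_of_mem _ p
      (LocalizedModule.mkLinearMap p.primeCompl M) hss
  have hmem : ∀ r ∈ rs, r ∈ Ideal.ofList rs := fun r hr ↦ Ideal.subset_span hr
  have hreg := hloc rs (fun r hr ↦ hIp (hmem r hr)) reg
  have hnt : Nontrivial (LocalizedModule p.primeCompl M ⧸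
      ((Ideal.ofList rs).map (algebraMap R (Localization.AtPrime p)) • ⊤ :
        Submodule (Localization.AtPrime p) (LocalizedModule p.primeCompl M))) := by
    rw [Ideal.map_ofList]
    exact Submodule.Quotient.nontrivial_iff.mpr hreg.top_ne_smul.symm
  have hzero := Module.supportDim_localizedModule_quotient_eq_zero (Ideal.ofList rs) p hpmin'
  have hdim : Module.supportDim (Localization.AtPrime p) (LocalizedModule p.primeCompl M) =
      rs.length := by
    rw [← Module.supportDim_add_length_eq_supportDim_of_isRegular _ hreg, ← Ideal.map_ofList,
      hzero, zero_add, List.length_map]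
  have hbound : ∀ ss : List (Localization.AtPrime p),
      IsRegular (LocalizedModule p.primeCompl M) ss → ss.length ≤ rs.length := fun ss hss ↦ by
    have := Module.length_le_supportDim_of_isRegular hss
    rw [hdim] at this
    exact_mod_cast this
  have htl : t = rs.length := by
    rw [ht]
    refine Module.grade_eq_length_of_isRegular reg hmem fun ss hss hssreg ↦ ?_
    simpa using hbound _ (hloc ss (fun r hr ↦ hIp (hss r hr)) hssreg)
  have hdim' : Module.dim (Localization.AtPrime p) (LocalizedModule p.primeCompl M) =
      (rs.length : WithBot (WithTop ℕ)) :=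
    (Module.supportDim_eq_ringKrullDim_quotient_annihilator _ _).symm.trans hdim
  refine ⟨htl ▸ hdim', ?_⟩
  rw [Module.IsCM, hdim', Module.grade_eq_length_of_isRegular hreg, List.length_map]
  · intro r hr
    obtain ⟨s, hs, rfl⟩ := List.mem_map.mp hr
    exact (IsLocalization.AtPrime.to_map_mem_maximal_iff _ p s).mpr (hIp (hmem s hs))
  · intro ss _ hss
    simpa using hbound ss hss
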